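/- arXiv:2207.03016 — 5 statements merged into one kernel-verified Lean document; each statement's English description precedes it below -/
import Mathlib

section
/- The domain D^c ⊆ ℝ^{ℓ−1} is a convex set. -/
open Finset

noncomputable section

/-- Membership in the domain `D` of the optimization problem. -/
def memD (ℓ : ℕ) (a b x y : ℕ → ℝ) : Prop :=
  (∀ i ∈ Finset.Icc 1 ℓ, 0 < x i ∧ 0 < y i) ∧
  (∑ i ∈ Finset.Icc 1 ℓ, (x i + y i)) ≤ 1 ∧
  (∀ m ∈ Finset.Icc 1 ℓ,
    0 ≤ ∑ i ∈ Finset.Icc 1 m, (x i - (a i) ^ 2 / (2 * x i) - (b i) ^ 2 / (2 * y i)))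

/-- Membership in the domain `D̂`: elements of `D` where the cumulative condition holds with
equality for `m = ℓ`. -/
def memDhat (ℓ : ℕ) (a b x y : ℕ → ℝ) : Prop :=
  memD ℓ a b x y ∧
  (∑ i ∈ Finset.Icc 1 ℓ, (x i - (a i) ^ 2 / (2 * x i) - (b i) ^ 2 / (2 * y i))) = 0

/-- The convention `c_0 = c_ℓ = 0`. -/
def cbar (ℓ : ℕ) (c : ℕ → ℝ) (m : ℕ) : ℝ := if m = 0 ∨ m = ℓ then 0 else c m

/-- Membership in `D^m(c, c')`. -/
def memDm (a b : ℕ → ℝ) (N : ℝ) (m : ℕ) (c c' x y : ℝ) : Prop :=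
  0 < x ∧ 0 < y ∧ x + y ≤ N ∧ c + x - (a m) ^ 2 / (2 * x) - (b m) ^ 2 / (2 * y) = c'

/-- Membership in `D̃(c_1, …, c_{ℓ-1})`. -/
def memDtilde (ℓ : ℕ) (a b : ℕ → ℝ) (N : ℝ) (c x y : ℕ → ℝ) : Prop :=
  (∑ i ∈ Finset.Icc 1 ℓ, (x i + y i)) ≤ 1 ∧
  ∀ m ∈ Finset.Icc 1 ℓ, memDm a b N m (cbar ℓ c (m - 1)) (cbar ℓ c m) (x m) (y m)

/-- Membership in `D^c`. -/
def memDc (ℓ : ℕ) (a b : ℕ → ℝ) (N : ℝ) (c : ℕ → ℝ) : Prop :=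
  (∀ m ∈ Finset.Icc 1 (ℓ - 1), 0 ≤ c m) ∧ ∃ x y, memDtilde ℓ a b N c x y

/-- `(x, y)` minimizes `x + y` over `D^m(c, c')`. -/
def isArgminDm (a b : ℕ → ℝ) (N : ℝ) (m : ℕ) (c c' x y : ℝ) : Prop :=
  memDm a b N m c c' x y ∧ ∀ x' y' : ℝ, memDm a b N m c c' x' y' → x + y ≤ x' + y'

/-- The projection `D^m_x(c, C)` of `D^m(c, C)` to the first coordinate. -/
def Dmx (a b : ℕ → ℝ) (N : ℝ) (m : ℕ) (c C : ℝ) : Set ℝ :=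
  {x : ℝ | ∃ y : ℝ, memDm a b N m c C x y}

/-- The function `f(c̃) = sqrt((1 + c̃)/2 + sqrt(c̃²/4 + c̃))`. -/
def fval (c : ℝ) : ℝ := Real.sqrt ((1 + c) / 2 + Real.sqrt (c ^ 2 / 4 + c))

/-- `c̃ = (Σ b_i)² / (2 (Σ a_i)²)`. -/
def ctilde (ℓ : ℕ) (a b : ℕ → ℝ) : ℝ :=
  (∑ i ∈ Finset.Icc 1 ℓ, b i) ^ 2 / (2 * (∑ i ∈ Finset.Icc 1 ℓ, a i) ^ 2)

/-- The objective function `F` on `ℝ^{2ℓ}`. -/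
def Fobj (ℓ : ℕ) (a b x y : ℕ → ℝ) : ℝ :=
  (1 - ∑ i ∈ Finset.Icc 1 ℓ, (x i + y i)) *
  (1 - ∑ i ∈ Finset.Icc 1 ℓ, (y i + (a i) ^ 2 / (2 * x i) + (b i) ^ 2 / (2 * y i)))

/-- The late-expensive-obstacles assumption. -/
def LateExpensive (ℓ : ℕ) (a b : ℕ → ℝ) : Prop :=
  ∀ m, 1 ≤ m → m < ℓ →
    (∑ i ∈ Finset.Icc 1 m, b i) / (∑ i ∈ Finset.Icc 1 m, a i) <
      (∑ i ∈ Finset.Icc (m + 1) ℓ, b i) / (∑ i ∈ Finset.Icc (m + 1) ℓ, a i)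

/-- The ratio `(Σ_{j=p}^q b_j) / (Σ_{j=p}^q a_j)`. -/
def ratioBA (a b : ℕ → ℝ) (p q : ℕ) : ℝ :=
  (∑ j ∈ Finset.Icc p q, b j) / (∑ j ∈ Finset.Icc p q, a j)

/-- `u` (on indices `0, …, n+1`) is an admissible division into blocks. -/
def AdmissibleDiv (ℓ : ℕ) (a b : ℕ → ℝ) (n : ℕ) (u : ℕ → ℕ) : Prop :=
  u 0 = 0 ∧ u (n + 1) = ℓ ∧ (∀ i ≤ n, u i < u (i + 1)) ∧
  ∀ i ≤ n, ∀ m, u i < m → m < u (i + 1) →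
    ratioBA a b (u i + 1) m < ratioBA a b (m + 1) (u (i + 1))

/-- The canonical admissible division into blocks: the admissible division whose index
set is the intersection of the index sets of all admissible divisions into blocks. -/
def IsCanonicalDiv (ℓ : ℕ) (a b : ℕ → ℝ) (n : ℕ) (u : ℕ → ℕ) : Prop :=
  AdmissibleDiv ℓ a b n u ∧
  ∀ k, (∃ i ≤ n + 1, u i = k) ↔
    ∀ (n' : ℕ) (u' : ℕ → ℕ), AdmissibleDiv ℓ a b n' u' → ∃ i ≤ n' + 1, u' i = k

/-- The minimal time to cross one block with branching length `A` and obstacle length `B`. -/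
def blockTime (A B : ℝ) : ℝ :=
  A * fval (B ^ 2 / (2 * A ^ 2)) +
    B ^ 2 / (2 * A * (fval (B ^ 2 / (2 * A ^ 2)) - 1 / (2 * fval (B ^ 2 / (2 * A ^ 2)))))

/-- The total optimal time `T*` associated with a division into blocks. -/
def Tstar (a b : ℕ → ℝ) (n : ℕ) (u : ℕ → ℕ) : ℝ :=
  ∑ i ∈ Finset.range (n + 1),
    blockTime (∑ j ∈ Finset.Icc (u i + 1) (u (i + 1)), a j)
      (∑ j ∈ Finset.Icc (u i + 1) (u (i + 1)), b j)

/-- The coefficient appearing in the formula for the optimal `c_m`. -/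
def coefC (ℓ : ℕ) (a b : ℕ → ℝ) (m : ℕ) : ℝ :=
  ((∑ i ∈ Finset.Icc 1 m, a i) * (∑ i ∈ Finset.Icc (m + 1) ℓ, b i) -
    (∑ i ∈ Finset.Icc 1 m, b i) * (∑ i ∈ Finset.Icc (m + 1) ℓ, a i)) /
    (∑ i ∈ Finset.Icc 1 ℓ, b i)

/-! The increment `x - a²/(2x) - b²/(2y)` of the buffer `c` across an obstacle is concave in the
times `(x, y)`, so averaging two ways of crossing the obstacle gives at least the average
increment. Scaling `(x, y)` towards `0` drives the increment continuously to `-∞` (unless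
`a = b = 0`, when it is linear and there is no excess), so the excess can be removed while only
saving time. Hence the achievable pairs of an increment and a time budget form a convex set for each
obstacle, and convexity passes to `D^c` by averaging the time budgets. -/

/-- The increment `c_m - c_{m-1}` prescribed by `D^m`, for lengths `A = a_m` and `B = b_m` and times
`p = (x_m, y_m)`. -/
def increment (A B : ℝ) (p : ℝ × ℝ) : ℝ :=
  p.1 - A ^ 2 / (2 * p.1) - B ^ 2 / (2 * p.2)

/-- The pairs `(δ, τ)` such that an obstacle with lengths `A`, `B` can be crossed with increment
exactly `δ` within time `τ`. -/
def achievable (A B : ℝ) : Set (ℝ × ℝ) :=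
  {q | ∃ p : ℝ × ℝ, 0 < p.1 ∧ 0 < p.2 ∧ increment A B p = q.1 ∧ p.1 + p.2 ≤ q.2}

theorem convexOn_div_two_mul {K : ℝ} (hK : 0 ≤ K) :
    ConvexOn ℝ (Set.Ioi 0) fun x : ℝ => K / (2 * x) := by
  refine ((convexOn_zpow (-1)).smul (div_nonneg hK zero_le_two)).congr fun x _ => ?_
  simp only [zpow_neg_one, smul_eq_mul]
  ring

theorem concaveOn_increment (A B : ℝ) :
    ConcaveOn ℝ (Set.Ioi 0 ×ˢ Set.Ioi 0) (increment A B) := by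
  have quadrant_convex : Convex ℝ (Set.Ioi (0 : ℝ) ×ˢ Set.Ioi (0 : ℝ)) :=
    (convex_Ioi 0).prod (convex_Ioi 0)
  have branching_convex : ConvexOn ℝ (Set.Ioi (0 : ℝ) ×ˢ Set.Ioi (0 : ℝ))
      fun p : ℝ × ℝ => A ^ 2 / (2 * p.1) :=
    ((convexOn_div_two_mul (sq_nonneg A)).comp_linearMap (LinearMap.fst ℝ ℝ ℝ)).subset
      (fun _ hp => hp.1) quadrant_convex
  have obstacle_convex : ConvexOn ℝ (Set.Ioi (0 : ℝ) ×ˢ Set.Ioi (0 : ℝ))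
      fun p : ℝ × ℝ => B ^ 2 / (2 * p.2) :=
    ((convexOn_div_two_mul (sq_nonneg B)).comp_linearMap (LinearMap.snd ℝ ℝ ℝ)).subset
      (fun _ hp => hp.2) quadrant_convex
  exact (((LinearMap.fst ℝ ℝ ℝ).concaveOn quadrant_convex).sub branching_convex).sub
    obstacle_convex

theorem increment_smul (A B r : ℝ) (p : ℝ × ℝ) :
    increment A B (r • p) = r * p.1 - (A ^ 2 / (2 * p.1) + B ^ 2 / (2 * p.2)) / r := by
  simp only [increment, Prod.smul_fst, Prod.smul_snd, smul_eq_mul, div_eq_mul_inv, mul_inv]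
  ring

open Filter Topology in
theorem tendsto_mul_sub_div_nhdsGT_zero (x : ℝ) {K : ℝ} (hK : 0 < K) :
    Tendsto (fun r : ℝ => r * x - K / r) (𝓝[>] 0) atBot := by
  have mul_part : Tendsto (fun r : ℝ => r * x) (𝓝[>] 0) (𝓝 (0 * x)) :=
    (tendsto_id.mul_const x).mono_left nhdsWithin_le_nhds
  have div_part : Tendsto (fun r : ℝ => -(K / r)) (𝓝[>] 0) atBot :=
    tendsto_neg_atTop_atBot.comp (tendsto_inv_nhdsGT_zero.const_mul_atTop hK)
  exact mul_part.add_atBot div_part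

theorem exists_mul_sub_div_eq_of_le {x K δ : ℝ} (hK : 0 < K) (hδ : δ ≤ x - K) :
    ∃ r ∈ Set.Ioc (0 : ℝ) 1, r * x - K / r = δ := by
  have continuousOn : ContinuousOn (fun r : ℝ => r * x - K / r) (Set.Ioc 0 1) :=
    (continuousOn_id.mul continuousOn_const).sub
      (continuousOn_const.div continuousOn_id fun r hr => hr.1.ne')
  exact isPreconnected_Ioc.intermediate_value_Iic ⟨one_pos, le_rfl⟩
    (Filter.le_principal_iff.2 (Ioc_mem_nhdsGT one_pos)) continuousOn
    (tendsto_mul_sub_div_nhdsGT_zero x hK) (by simpa using hδ)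

theorem exists_le_increment_eq_of_le {A B δ : ℝ} {p : ℝ × ℝ} (hAB : A ≠ 0 ∨ B ≠ 0)
    (hp₁ : 0 < p.1) (hp₂ : 0 < p.2) (hδ : δ ≤ increment A B p) :
    ∃ q ≤ p, 0 < q.1 ∧ 0 < q.2 ∧ increment A B q = δ := by
  have cost_pos : 0 < A ^ 2 / (2 * p.1) + B ^ 2 / (2 * p.2) := by
    rcases hAB with hA | hB <;> positivity
  obtain ⟨r, ⟨hr₀, hr₁⟩, hr⟩ := exists_mul_sub_div_eq_of_le cost_pos
    (hδ.trans_eq (sub_sub _ _ _))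
  exact ⟨r • p, ⟨mul_le_of_le_one_left hp₁.le hr₁, mul_le_of_le_one_left hp₂.le hr₁⟩,
    mul_pos hr₀ hp₁, mul_pos hr₀ hp₂, (increment_smul A B r p).trans hr⟩

theorem convex_achievable (A B : ℝ) : Convex ℝ (achievable A B) := by
  rintro q ⟨p, hp₁, hp₂, hpδ, hpτ⟩ q' ⟨p', hp₁', hp₂', hpδ', hpτ'⟩ s t hs ht hst
  have mem_quadrant : s • p + t • p' ∈ Set.Ioi (0 : ℝ) ×ˢ Set.Ioi (0 : ℝ) :=
    (concaveOn_increment A B).1 ⟨hp₁, hp₂⟩ ⟨hp₁', hp₂'⟩ hs ht hst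
  have le_increment : s * q.1 + t * q'.1 ≤ increment A B (s • p + t • p') := by
    rw [← hpδ, ← hpδ']
    exact (concaveOn_increment A B).2 ⟨hp₁, hp₂⟩ ⟨hp₁', hp₂'⟩ hs ht hst
  obtain ⟨r, ⟨hr₁_le, hr₂_le⟩, hr₁, hr₂, hrδ⟩ : ∃ r ≤ s • p + t • p', 0 < r.1 ∧ 0 < r.2 ∧
      increment A B r = s * q.1 + t * q'.1 := by
    by_cases hAB : A ≠ 0 ∨ B ≠ 0
    · exact exists_le_increment_eq_of_le hAB mem_quadrant.1 mem_quadrant.2 le_increment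
    · obtain ⟨rfl, rfl⟩ : A = 0 ∧ B = 0 := by simpa using hAB
      exact ⟨_, le_rfl, mem_quadrant.1, mem_quadrant.2, by simp [← hpδ, ← hpδ', increment]⟩
  refine ⟨r, hr₁, hr₂, hrδ, ?_⟩
  calc r.1 + r.2 ≤ (s * p.1 + t * p'.1) + (s * p.2 + t * p'.2) := add_le_add hr₁_le hr₂_le
    _ = s * (p.1 + p.2) + t * (p'.1 + p'.2) := by ring
    _ ≤ s * q.2 + t * q'.2 := by gcongr

theorem cbar_smul_add_smul (ℓ : ℕ) (c c' : ℕ → ℝ) (s t : ℝ) (m : ℕ) :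
    cbar ℓ (s • c + t • c') m = s * cbar ℓ c m + t * cbar ℓ c' m := by
  simp only [cbar]
  split_ifs <;> simp

/-- An allocation `τ` of the total time `1` to the obstacles within which the levels `c` can be
realised. Replacing `x_m + y_m` by an upper bound `τ m` makes the condition jointly convex in
`(c, τ)`. -/
def IsTimeBudget (ℓ : ℕ) (a b : ℕ → ℝ) (N : ℝ) (c τ : ℕ → ℝ) : Prop :=
  ∑ m ∈ Icc 1 ℓ, τ m ≤ 1 ∧ ∀ m ∈ Icc 1 ℓ, τ m ≤ N ∧
    (cbar ℓ c m - cbar ℓ c (m - 1), τ m) ∈ achievable (a m) (b m)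

theorem exists_memDtilde_iff {ℓ : ℕ} {a b : ℕ → ℝ} {N : ℝ} {c : ℕ → ℝ} :
    (∃ x y, memDtilde ℓ a b N c x y) ↔ ∃ τ, IsTimeBudget ℓ a b N c τ := by
  constructor
  · rintro ⟨x, y, hsum, hxy⟩
    refine ⟨x + y, hsum, fun m hm => ?_⟩
    obtain ⟨hx, hy, hN, hc⟩ := hxy m hm
    exact ⟨hN, (x m, y m), hx, hy, by simp only [increment]; linarith, le_rfl⟩
  · rintro ⟨τ, hsum, hτ⟩
    choose! p hx hy hδ hle using fun m hm => (hτ m hm).2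
    refine ⟨fun m => (p m).1, fun m => (p m).2, (sum_le_sum hle).trans hsum, fun m hm =>
      ⟨hx m hm, hy m hm, (hle m hm).trans (hτ m hm).1, ?_⟩⟩
    have := hδ m hm
    simp only [increment] at this
    linarith

theorem IsTimeBudget.smul_add_smul {ℓ : ℕ} {a b : ℕ → ℝ} {N : ℝ} {c c' τ τ' : ℕ → ℝ} {s t : ℝ}
    (hτ : IsTimeBudget ℓ a b N c τ) (hτ' : IsTimeBudget ℓ a b N c' τ')
    (hs : 0 ≤ s) (ht : 0 ≤ t) (hst : s + t = 1) :
    IsTimeBudget ℓ a b N (s • c + t • c') (s • τ + t • τ') := by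
  refine ⟨?_, fun m hm => ⟨convex_Iic N (hτ.2 m hm).1 (hτ'.2 m hm).1 hs ht hst, ?_⟩⟩
  · simpa [sum_add_distrib, mul_sum] using convex_Iic (1 : ℝ) hτ.1 hτ'.1 hs ht hst
  · convert convex_achievable (a m) (b m) (hτ.2 m hm).2 (hτ'.2 m hm).2 hs ht hst using 1
    ext
    · simp only [cbar_smul_add_smul, Prod.fst_add, Prod.smul_fst, smul_eq_mul]
      ring
    · rfl

theorem Dc_convex_general (ℓ : ℕ) (a b : ℕ → ℝ) (N : ℝ) :
    Convex ℝ {c : ℕ → ℝ | memDc ℓ a b N c} := by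
  rintro c ⟨hc, hxy⟩ c' ⟨hc', hxy'⟩ s t hs ht hst
  obtain ⟨τ, hτ⟩ := exists_memDtilde_iff.1 hxy
  obtain ⟨τ', hτ'⟩ := exists_memDtilde_iff.1 hxy'
  exact ⟨fun m hm => convex_Ici (0 : ℝ) (hc m hm) (hc' m hm) hs ht hst,
    exists_memDtilde_iff.2 ⟨s • τ + t • τ', hτ.smul_add_smul hτ' hs ht hst⟩⟩

/-- The domain `D^c` is convex. -/
theorem Dc_convex (ℓ : ℕ) (hℓ : 1 ≤ ℓ) (a b : ℕ → ℝ)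
    (ha : ∀ i ∈ Finset.Icc 1 ℓ, 0 < a i) (hb : ∀ i ∈ Finset.Icc 1 ℓ, 0 < b i)
    (N : ℝ) (hN : 1 < N) :
    Convex ℝ {c : ℕ → ℝ | memDc ℓ a b N c} :=
  Dc_convex_general ℓ a b N
end
end

section
/- Let (c_1,…,c_{ℓ−1}) ∈ D^c and set c_0 = c_ℓ = 0. Then there exists exactly one tuple (x_1^c,y_1^c,…,x_ℓ^c,y_ℓ^c) such that, for every m = 1,…,ℓ, (x_m^c, y_m^c) minimizes x + y over D^m(c_{m−1}, c_m); this tuple lies in D̃(c_1,…,c_{ℓ−1}). Moreover, for each m, x_m^c satisfies the first-order condition b_m²/(2(c_{m−1} + x_m^c − a_m²/(2x_m^c) − c_m)²) = 1/(1 + a_m²/(2(x_m^c)²)); it is the largest real solution of this equation, it is the only solution of this equation lying in D^m_x(c_{m−1}, c_m), and it is not a boundary point of D^m_x(c_{m−1}, c_m). -/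
open Finset

noncomputable section

open Filter Topology

/-!
Put `h x = c + x - a² / (2 x) - C`. On `x > 0` the set `D^m(c, C)` is the part of the graph of
`y = b² / (2 h x)` with `h x > 0` and `x + y ≤ N`. A point with `h x > 0` satisfies the first-order
condition exactly when `h x = √(b² h'(x) / 2)`. The left side increases strictly from `-∞` to `∞`
while the right side decreases, so there is exactly one such point, and no solution lies beyond it.
This point is the strict minimizer of `x + y`: bound `h` from above by its tangent (`h` is concave),
then use that `b² / (2 h) + h / h'(x)` is smallest where `h = h x`. The minimum is at most `1 < N`,
so the constraint `x + y ≤ N` is not active there and the minimizer is an interior point.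
-/

/-- The function `h x = c + x - a² / (2 x) - C`, equal to `b² / (2 y)` along `D^m(c, C)`. -/
def surplus (a c C x : ℝ) : ℝ := c + x - a ^ 2 / (2 * x) - C

/-- The derivative of `surplus a c C` at `x ≠ 0`. -/
def surplusSlope (a x : ℝ) : ℝ := 1 + a ^ 2 / (2 * x ^ 2)

/-- The coordinate `y` that `x` determines on `D^m(c, C)`, obtained by solving
`surplus a c C x = b² / (2 y)`. -/
def obstacleTime (a b c C x : ℝ) : ℝ := b ^ 2 / (2 * surplus a c C x)

/-- The first-order condition for minimizing `x + obstacleTime a b c C x`. -/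
def FirstOrderCond (a b c C x : ℝ) : Prop :=
  b ^ 2 / (2 * surplus a c C x ^ 2) = 1 / surplusSlope a x

/-- A critical point of `x + obstacleTime a b c C x` in the region where both summands are
positive. -/
structure IsCritical (a b c C x : ℝ) : Prop where
  pos : 0 < x
  surplus_pos : 0 < surplus a c C x
  foc : FirstOrderCond a b c C x

/-- The function whose zeros on the positive half-line are the critical points when `b ≠ 0`:
taking square roots in the first-order condition makes the difference of its sides monotone. -/
def criticalGap (a b c C x : ℝ) : ℝ := surplus a c C x - √(b ^ 2 * surplusSlope a x / 2)

section Surplus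

variable {a x z : ℝ} (c C : ℝ)

theorem surplusSlope_pos (a x : ℝ) : 0 < surplusSlope a x := by
  unfold surplusSlope
  positivity

theorem surplusSlope_antitoneOn (a : ℝ) : AntitoneOn (surplusSlope a) (Set.Ioi 0) := by
  intro x (hx : 0 < x) z _ hxz
  unfold surplusSlope
  gcongr

theorem surplus_strictMonoOn (a : ℝ) : StrictMonoOn (surplus a c C) (Set.Ioi 0) := by
  intro x (hx : 0 < x) z _ hxz
  have hdiv : a ^ 2 / (2 * z) ≤ a ^ 2 / (2 * x) := by gcongr
  unfold surplus
  linarith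

theorem surplus_le_tangent (hx : x ≠ 0) (hz : 0 < z) :
    surplus a c C z ≤ surplus a c C x + surplusSlope a x * (z - x) := by
  have hdiff : surplus a c C x + surplusSlope a x * (z - x) - surplus a c C z =
      a ^ 2 * (z - x) ^ 2 / (2 * z * x ^ 2) := by
    unfold surplus surplusSlope
    field_simp
    ring
  have hnonneg : 0 ≤ a ^ 2 * (z - x) ^ 2 / (2 * z * x ^ 2) := by positivity
  linarith

theorem continuousOn_surplus (a : ℝ) : ContinuousOn (surplus a c C) (Set.Ioi 0) := by
  unfold surplus
  fun_prop (disch := intro x (hx : 0 < x); positivity)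

theorem tendsto_surplus_nhdsGT_zero (ha : a ≠ 0) :
    Tendsto (surplus a c C) (𝓝[>] 0) atBot := by
  have hinv : Tendsto (fun x : ℝ ↦ a ^ 2 / 2 * x⁻¹) (𝓝[>] 0) atTop :=
    tendsto_inv_nhdsGT_zero.const_mul_atTop (by positivity)
  have hlin : Tendsto (fun x : ℝ ↦ c + x - C) (𝓝[>] 0) (𝓝 (c + 0 - C)) :=
    ((continuous_const.add continuous_id).sub continuous_const).continuousAt.tendsto.mono_left
      nhdsWithin_le_nhds
  refine (hlin.add_atBot (tendsto_neg_atTop_atBot.comp hinv)).congr fun x ↦ ?_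
  simp only [surplus, Function.comp_apply]
  ring

end Surplus

theorem div_add_div_lt_of_sq_eq {b h k s : ℝ} (hk : 0 < k) (hs : 0 < s)
    (hsq : h ^ 2 = b ^ 2 * s / 2) (hne : k ≠ h) :
    b ^ 2 / (2 * h) + h / s < b ^ 2 / (2 * k) + k / s := by
  have hb : b ^ 2 = 2 * h ^ 2 / s := by
    rw [hsq]
    field_simp
  have hdiff : b ^ 2 / (2 * k) + k / s - (b ^ 2 / (2 * h) + h / s) = (k - h) ^ 2 / (s * k) := by
    rw [hb]
    field_simp
    ring
  have hpos : 0 < (k - h) ^ 2 / (s * k) := by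
    have := sub_ne_zero.2 hne
    positivity
  linarith

section CriticalGap

variable {a b c C x z : ℝ}

theorem criticalGap_strictMonoOn (a b c C : ℝ) :
    StrictMonoOn (criticalGap a b c C) (Set.Ioi 0) := by
  intro x hx z hz hxz
  have hsurplus := surplus_strictMonoOn c C a hx hz hxz
  have hslope := surplusSlope_antitoneOn a hx hz hxz.le
  have hsqrt : √(b ^ 2 * surplusSlope a z / 2) ≤ √(b ^ 2 * surplusSlope a x / 2) := by gcongr
  unfold criticalGap
  linarith

theorem continuousOn_criticalGap (a b c C : ℝ) :
    ContinuousOn (criticalGap a b c C) (Set.Ioi 0) := by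
  have hslope : ContinuousOn (surplusSlope a) (Set.Ioi 0) := by
    unfold surplusSlope
    fun_prop (disch := intro x (hx : 0 < x); positivity)
  exact (continuousOn_surplus c C a).sub ((hslope.const_mul (b ^ 2)).div_const 2).sqrt

theorem tendsto_criticalGap_nhdsGT_zero (b c C : ℝ) (ha : a ≠ 0) :
    Tendsto (criticalGap a b c C) (𝓝[>] 0) atBot :=
  tendsto_atBot_mono (fun _ ↦ sub_le_self _ (Real.sqrt_nonneg _))
    (tendsto_surplus_nhdsGT_zero c C ha)

theorem tendsto_criticalGap_atTop (a b c C : ℝ) :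
    Tendsto (criticalGap a b c C) atTop atTop := by
  have hlin : Tendsto (fun x : ℝ ↦ x + (criticalGap a b c C 1 - 1)) atTop atTop :=
    tendsto_atTop_add_const_right _ _ tendsto_id
  refine tendsto_atTop_mono' atTop ?_ hlin
  filter_upwards [eventually_ge_atTop 1] with x hx
  have hx0 : 0 < x := one_pos.trans_le hx
  have hdiv : a ^ 2 / (2 * x) ≤ a ^ 2 / (2 * 1) := by gcongr
  have hslope := surplusSlope_antitoneOn a (Set.mem_Ioi.2 one_pos) hx0 hx
  have hsqrt : √(b ^ 2 * surplusSlope a x / 2) ≤ √(b ^ 2 * surplusSlope a 1 / 2) := by gcongr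
  unfold criticalGap surplus
  linarith

theorem exists_criticalGap_eq_zero (b c C : ℝ) (ha : a ≠ 0) :
    ∃ x, 0 < x ∧ criticalGap a b c C x = 0 :=
  isPreconnected_Ioi.intermediate_value_Iii (l₁ := 𝓝[>] 0) inf_le_right
    (le_principal_iff.2 (Ioi_mem_atTop 0)) (continuousOn_criticalGap a b c C)
    (tendsto_criticalGap_nhdsGT_zero b c C ha) (tendsto_criticalGap_atTop a b c C)
    (Set.mem_univ 0)

theorem FirstOrderCond.ne_zero (h : FirstOrderCond a b c C x) : b ≠ 0 := by
  rintro rfl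
  simp [FirstOrderCond, (surplusSlope_pos a x).ne] at h

theorem firstOrderCond_iff (hb : b ≠ 0) :
    FirstOrderCond a b c C x ↔ surplus a c C x ^ 2 = b ^ 2 * surplusSlope a x / 2 := by
  have hslope := surplusSlope_pos a x
  have hrhs : 0 < b ^ 2 * surplusSlope a x / 2 := by positivity
  unfold FirstOrderCond
  rcases eq_or_ne (surplus a c C x) 0 with hzero | hne
  -- `b ^ 2 / 0 = 0` is not the positive number `1 / surplusSlope a x`, so both sides are false.
  · simp [hzero, hslope.ne, hrhs.ne]
  · rw [div_eq_div_iff (by positivity) hslope.ne']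
    constructor <;> intro h <;> linarith

theorem isCritical_iff_criticalGap_eq_zero (hb : b ≠ 0) :
    IsCritical a b c C x ↔ 0 < x ∧ criticalGap a b c C x = 0 := by
  have hslope := surplusSlope_pos a x
  have hsqrt : 0 < √(b ^ 2 * surplusSlope a x / 2) := by positivity
  have hsq : √(b ^ 2 * surplusSlope a x / 2) ^ 2 = b ^ 2 * surplusSlope a x / 2 :=
    Real.sq_sqrt (by positivity)
  rw [criticalGap, sub_eq_zero]
  constructor
  · rintro ⟨hx, hpos, hfoc⟩
    rw [← (firstOrderCond_iff hb).1 hfoc, Real.sqrt_sq hpos.le]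
    exact ⟨hx, rfl⟩
  · rintro ⟨hx, heq⟩
    exact ⟨hx, heq ▸ hsqrt, (firstOrderCond_iff hb).2 (heq ▸ hsq)⟩

theorem exists_isCritical (c C : ℝ) (ha : a ≠ 0) (hb : b ≠ 0) : ∃ x, IsCritical a b c C x :=
  (exists_criticalGap_eq_zero b c C ha).imp fun _ ↦ (isCritical_iff_criticalGap_eq_zero hb).2

namespace IsCritical

theorem unique (hx : IsCritical a b c C x) (hz : IsCritical a b c C z) : z = x := by
  have hb := hx.foc.ne_zero
  rw [isCritical_iff_criticalGap_eq_zero hb] at hx hz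
  exact (criticalGap_strictMonoOn a b c C).injOn hz.1 hx.1 (hz.2.trans hx.2.symm)

theorem le_of_firstOrderCond (hx : IsCritical a b c C x) (hz : FirstOrderCond a b c C z) :
    z ≤ x := by
  by_contra! hxz
  have hz0 : 0 < z := hx.pos.trans hxz
  have hsurplus : 0 < surplus a c C z :=
    hx.surplus_pos.trans (surplus_strictMonoOn c C a hx.pos hz0 hxz)
  exact hxz.ne' (hx.unique ⟨hz0, hsurplus, hz⟩)

theorem add_obstacleTime_lt (hx : IsCritical a b c C x) (hz : 0 < z) (hsz : 0 < surplus a c C z)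
    (hne : z ≠ x) : x + obstacleTime a b c C x < z + obstacleTime a b c C z := by
  have htangent : (surplus a c C z - surplus a c C x) / surplusSlope a x ≤ z - x := by
    rw [div_le_iff₀ (surplusSlope_pos a x)]
    linarith [surplus_le_tangent (a := a) c C hx.pos.ne' hz]
  have hsurplus_ne : surplus a c C z ≠ surplus a c C x :=
    (surplus_strictMonoOn c C a).injOn.ne hz hx.pos hne
  have hlt := div_add_div_lt_of_sq_eq hsz (surplusSlope_pos a x)
    ((firstOrderCond_iff hx.foc.ne_zero).1 hx.foc) hsurplus_ne
  rw [sub_div] at htangent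
  unfold obstacleTime
  linarith

end IsCritical

end CriticalGap

section Dm

variable {a b : ℕ → ℝ} {N : ℝ} {m : ℕ} {c C x y x' y' : ℝ}

theorem memDm_iff (hb : b m ≠ 0) :
    memDm a b N m c C x y ↔ 0 < x ∧ 0 < surplus (a m) c C x ∧
      y = obstacleTime (a m) (b m) c C x ∧ x + y ≤ N := by
  constructor
  · rintro ⟨hx, hy, hN, heq⟩
    have hsurplus : surplus (a m) c C x = b m ^ 2 / (2 * y) := by
      unfold surplus
      linarith
    refine ⟨hx, hsurplus ▸ by positivity, ?_, hN⟩
    rw [obstacleTime, hsurplus]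
    field_simp
  · rintro ⟨hx, hsurplus, rfl, hN⟩
    have hinv : b m ^ 2 / (2 * obstacleTime (a m) (b m) c C x) = surplus (a m) c C x := by
      unfold obstacleTime
      field_simp
    refine ⟨hx, by unfold obstacleTime; positivity, hN, ?_⟩
    rw [hinv, surplus]
    ring

theorem mem_Dmx_iff (hb : b m ≠ 0) :
    x ∈ Dmx a b N m c C ↔ 0 < x ∧ 0 < surplus (a m) c C x ∧
      x + obstacleTime (a m) (b m) c C x ≤ N := by
  simp only [Dmx, Set.mem_ofPred_eq, memDm_iff hb]
  constructor
  · rintro ⟨_, hx, hsurplus, rfl, hN⟩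
    exact ⟨hx, hsurplus, hN⟩
  · rintro ⟨hx, hsurplus, hN⟩
    exact ⟨_, hx, hsurplus, rfl, hN⟩

namespace IsCritical

theorem add_obstacleTime_le_of_memDm (hx : IsCritical (a m) (b m) c C x)
    (h : memDm a b N m c C x' y') : x + obstacleTime (a m) (b m) c C x ≤ x' + y' := by
  obtain ⟨hx', hsurplus, rfl, -⟩ := (memDm_iff hx.foc.ne_zero).1 h
  rcases eq_or_ne x' x with rfl | hne
  · exact le_rfl
  · exact (hx.add_obstacleTime_lt hx' hsurplus hne).le

theorem isArgminDm_iff (hx : IsCritical (a m) (b m) c C x)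
    (hN : x + obstacleTime (a m) (b m) c C x ≤ N) :
    isArgminDm a b N m c C x' y' ↔ x' = x ∧ y' = obstacleTime (a m) (b m) c C x := by
  have hmem : memDm a b N m c C x (obstacleTime (a m) (b m) c C x) :=
    (memDm_iff hx.foc.ne_zero).2 ⟨hx.pos, hx.surplus_pos, rfl, hN⟩
  constructor
  · rintro ⟨hmem', hmin⟩
    obtain ⟨hx', hsurplus, rfl, -⟩ := (memDm_iff hx.foc.ne_zero).1 hmem'
    obtain rfl : x' = x := by
      by_contra hne
      exact (hx.add_obstacleTime_lt hx' hsurplus hne).not_ge (hmin _ _ hmem)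
    exact ⟨rfl, rfl⟩
  · rintro ⟨rfl, rfl⟩
    exact ⟨hmem, fun _ _ ↦ hx.add_obstacleTime_le_of_memDm⟩

theorem eq_of_mem_Dmx_of_firstOrderCond (hx : IsCritical (a m) (b m) c C x)
    (hmem : x' ∈ Dmx a b N m c C) (hfoc : FirstOrderCond (a m) (b m) c C x') : x' = x :=
  have ⟨hx', hsurplus, _⟩ := (mem_Dmx_iff hx.foc.ne_zero).1 hmem
  hx.unique ⟨hx', hsurplus, hfoc⟩

end IsCritical

theorem mem_interior_Dmx (hb : b m ≠ 0) (hx : 0 < x) (hsurplus : 0 < surplus (a m) c C x)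
    (hN : x + obstacleTime (a m) (b m) c C x < N) : x ∈ interior (Dmx a b N m c C) := by
  have hcont : ContinuousAt (surplus (a m) c C) x :=
    (continuousOn_surplus c C (a m)).continuousAt (Ioi_mem_nhds hx)
  have hcont_sum : ContinuousAt (fun z ↦ z + obstacleTime (a m) (b m) c C z) x :=
    continuousAt_id.add (continuousAt_const.div (hcont.const_mul 2) (by positivity))
  rw [mem_interior_iff_mem_nhds]
  filter_upwards [lt_mem_nhds hx, hcont.eventually (lt_mem_nhds hsurplus),
    hcont_sum.eventually (gt_mem_nhds hN)] with z hz hsz hzN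
  exact (mem_Dmx_iff hb).2 ⟨hz, hsz, hzN.le⟩

end Dm

theorem add_le_one_of_memDtilde {ℓ m : ℕ} {a b c x y : ℕ → ℝ} {N : ℝ}
    (h : memDtilde ℓ a b N c x y) (hm : m ∈ Icc 1 ℓ) : x m + y m ≤ 1 :=
  (single_le_sum (f := fun i ↦ x i + y i)
    (fun i hi ↦ (add_pos (h.2 i hi).1 (h.2 i hi).2.1).le) hm).trans h.1

theorem argmin_exists_unique_foc_general (ℓ : ℕ) (a b : ℕ → ℝ)
    (ha : ∀ i ∈ Icc 1 ℓ, a i ≠ 0) (hb : ∀ i ∈ Icc 1 ℓ, b i ≠ 0) (N : ℝ) (hN : 1 < N)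
    (c : ℕ → ℝ) (hc : ∃ x y, memDtilde ℓ a b N c x y) :
    ∃ xc yc : ℕ → ℝ,
      (∀ m ∈ Icc 1 ℓ, isArgminDm a b N m (cbar ℓ c (m - 1)) (cbar ℓ c m) (xc m) (yc m)) ∧
      memDtilde ℓ a b N c xc yc ∧
      (∀ xc' yc' : ℕ → ℝ,
        (∀ m ∈ Icc 1 ℓ,
          isArgminDm a b N m (cbar ℓ c (m - 1)) (cbar ℓ c m) (xc' m) (yc' m)) →
        ∀ m ∈ Icc 1 ℓ, xc' m = xc m ∧ yc' m = yc m) ∧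
      ∀ m ∈ Icc 1 ℓ,
        FirstOrderCond (a m) (b m) (cbar ℓ c (m - 1)) (cbar ℓ c m) (xc m) ∧
        (∀ z, FirstOrderCond (a m) (b m) (cbar ℓ c (m - 1)) (cbar ℓ c m) z → z ≤ xc m) ∧
        (∀ z ∈ Dmx a b N m (cbar ℓ c (m - 1)) (cbar ℓ c m),
          FirstOrderCond (a m) (b m) (cbar ℓ c (m - 1)) (cbar ℓ c m) z → z = xc m) ∧
        xc m ∉ frontier (Dmx a b N m (cbar ℓ c (m - 1)) (cbar ℓ c m)) := by
  obtain ⟨x₀, y₀, h₀⟩ := hc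
  choose! xc hcrit using fun m (hm : m ∈ Icc 1 ℓ) ↦
    exists_isCritical (cbar ℓ c (m - 1)) (cbar ℓ c m) (ha m hm) (hb m hm)
  set yc : ℕ → ℝ := fun m ↦ obstacleTime (a m) (b m) (cbar ℓ c (m - 1)) (cbar ℓ c m) (xc m)
  have hle (m) (hm : m ∈ Icc 1 ℓ) : xc m + yc m ≤ x₀ m + y₀ m :=
    (hcrit m hm).add_obstacleTime_le_of_memDm (h₀.2 m hm)
  have hlt (m) (hm : m ∈ Icc 1 ℓ) : xc m + yc m < N :=
    ((hle m hm).trans (add_le_one_of_memDtilde h₀ hm)).trans_lt hN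
  have hargmin (m) (hm : m ∈ Icc 1 ℓ) (x y : ℝ) :
      isArgminDm a b N m (cbar ℓ c (m - 1)) (cbar ℓ c m) x y ↔ x = xc m ∧ y = yc m :=
    (hcrit m hm).isArgminDm_iff (hlt m hm).le
  have hargmin_c (m) (hm : m ∈ Icc 1 ℓ) := (hargmin m hm (xc m) (yc m)).2 ⟨rfl, rfl⟩
  refine ⟨xc, yc, hargmin_c, ⟨(sum_le_sum hle).trans h₀.1, fun m hm ↦ (hargmin_c m hm).1⟩,
    fun xc' yc' h m hm ↦ (hargmin m hm _ _).1 (h m hm), fun m hm ↦ ⟨(hcrit m hm).foc,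
      fun z ↦ (hcrit m hm).le_of_firstOrderCond,
      fun z ↦ (hcrit m hm).eq_of_mem_Dmx_of_firstOrderCond, fun hfrontier ↦ ?_⟩⟩
  exact hfrontier.2
    (mem_interior_Dmx (hb m hm) (hcrit m hm).pos (hcrit m hm).surplus_pos (hlt m hm))

/-- For `(c_1,…,c_{ℓ−1}) ∈ D^c` there is exactly one tuple
`(x_1^c, y_1^c, …, x_ℓ^c, y_ℓ^c)` such that `(x_m^c, y_m^c)` minimizes `x + y` over
`D^m(c_{m−1}, c_m)` for each `m`; it lies in `D̃`, each `x_m^c` satisfies the first-order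
condition, is the largest real solution of it, the only solution in `D^m_x(c_{m−1}, c_m)`,
and is not a boundary point of `D^m_x(c_{m−1}, c_m)`. -/
theorem argmin_exists_unique_foc (ℓ : ℕ) (hℓ : 1 ≤ ℓ) (a b : ℕ → ℝ)
    (ha : ∀ i ∈ Finset.Icc 1 ℓ, 0 < a i) (hb : ∀ i ∈ Finset.Icc 1 ℓ, 0 < b i)
    (N : ℝ) (hN : 1 < N)
    (c : ℕ → ℝ) (hc : memDc ℓ a b N c) :
    ∃ xc yc : ℕ → ℝ,
      (∀ m ∈ Finset.Icc 1 ℓ,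
        isArgminDm a b N m (cbar ℓ c (m - 1)) (cbar ℓ c m) (xc m) (yc m)) ∧
      memDtilde ℓ a b N c xc yc ∧
      (∀ xc' yc' : ℕ → ℝ,
        (∀ m ∈ Finset.Icc 1 ℓ,
          isArgminDm a b N m (cbar ℓ c (m - 1)) (cbar ℓ c m) (xc' m) (yc' m)) →
        ∀ m ∈ Finset.Icc 1 ℓ, xc' m = xc m ∧ yc' m = yc m) ∧
      (∀ m ∈ Finset.Icc 1 ℓ,
        ((b m) ^ 2 /
            (2 * (cbar ℓ c (m - 1) + xc m - (a m) ^ 2 / (2 * xc m) - cbar ℓ c m) ^ 2) =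
          1 / (1 + (a m) ^ 2 / (2 * (xc m) ^ 2))) ∧
        (∀ z : ℝ,
          (b m) ^ 2 /
              (2 * (cbar ℓ c (m - 1) + z - (a m) ^ 2 / (2 * z) - cbar ℓ c m) ^ 2) =
            1 / (1 + (a m) ^ 2 / (2 * z ^ 2)) → z ≤ xc m) ∧
        (∀ z ∈ Dmx a b N m (cbar ℓ c (m - 1)) (cbar ℓ c m),
          (b m) ^ 2 /
              (2 * (cbar ℓ c (m - 1) + z - (a m) ^ 2 / (2 * z) - cbar ℓ c m) ^ 2) =
            1 / (1 + (a m) ^ 2 / (2 * z ^ 2)) → z = xc m) ∧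
        xc m ∉ frontier (Dmx a b N m (cbar ℓ c (m - 1)) (cbar ℓ c m))) := by
  exact argmin_exists_unique_foc_general ℓ a b (fun i hi ↦ (ha i hi).ne')
    (fun i hi ↦ (hb i hi).ne') N hN c hc.2
end
end

section
/- Let (c_1,…,c_{ℓ−1}) be a point in the interior of D^c and let m ∈ {1,…,ℓ−1}. Then the map c_m ↦ x_m^c (varying the m-th coordinate with all other coordinates fixed) is differentiable at c_m, with derivative ≥ 0; and the map c_m ↦ x_{m+1}^c is differentiable at c_m, with derivative ≤ 0. -/
open Finset

noncomputable section

/-!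
Eliminating `y` from the constraint of `D^m(c, c')` turns the minimization into that of
`x + b² / (2 (g x - t))` with `g x = x - a² / (2 x)` and `t = c' - c`. Since a sum `≤ 1 < N` leaves
the bound `x + y ≤ N` inactive, the minimizer is stationary: `(g x - t)² = (b² / 2) g' x`.
Solving for `t` expresses `t` as a function of `x` which is strictly increasing with positive
derivative, so `x` depends differentiably and increasingly on `t`. Finally, `c_m` enters the `m`-th
constraint as `c'` and the `(m+1)`-st as `c`, whence the two opposite signs.
-/

section ArgminDerivative

open Filter Topology

theorem hasStrictDerivAt_of_eventually_rightInverse {𝕜 : Type*} [NontriviallyNormedField 𝕜]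
    [CompleteSpace 𝕜] {f x : 𝕜 → 𝕜} {s : Set 𝕜} {d t₀ : 𝕜} (hinj : Set.InjOn f s)
    (hs : s ∈ 𝓝 (x t₀)) (hf : HasStrictDerivAt f d (x t₀)) (hd : d ≠ 0)
    (hx : ∀ᶠ t in 𝓝 t₀, x t ∈ s ∧ f (x t) = t) : HasStrictDerivAt x d⁻¹ t₀ := by
  have hft₀ : f (x t₀) = t₀ := hx.self_of_nhds.2
  have hft : Tendsto f (𝓝 (x t₀)) (𝓝 t₀) := by
    simpa only [hft₀] using hf.hasDerivAt.continuousAt.tendsto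
  have hleft : ∀ᶠ z in 𝓝 (x t₀), x (f z) = z := by
    filter_upwards [hs, hft.eventually hx] with z hz ⟨hxs, hfx⟩
    exact hinj hxs hz hfx
  simpa only [hft₀] using hf.to_local_left_inverse hd hleft

theorem sq_eq_mul_of_isLocalMin_add_div {g : ℝ → ℝ} {g' k x : ℝ} (hg : HasDerivAt g g' x)
    (hgx : g x ≠ 0) (hmin : IsLocalMin (fun z => z + k / g z) x) : g x ^ 2 = k * g' := by
  have hderiv : HasDerivAt (fun z => z + k / g z) (1 + (0 * g x - k * g') / g x ^ 2) x :=
    (hasDerivAt_id' x).add ((hasDerivAt_const x k).fun_div hg hgx)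
  have hstat := hmin.hasDerivAt_eq_zero hderiv
  field_simp at hstat
  linarith

/-- The part `x - α² / (2x)` of the constraint defining `D^m(c, c')` that depends on `x` only, for
an obstacle with `a_m = α`. -/
def netGain (α x : ℝ) : ℝ := x - α ^ 2 / (2 * x)

theorem hasStrictDerivAt_netGain (α : ℝ) {x : ℝ} (hx : x ≠ 0) :
    HasStrictDerivAt (netGain α) (1 + α ^ 2 / (2 * x ^ 2)) x := by
  have hinv : HasStrictDerivAt (fun z => α ^ 2 / (2 * z))
      ((0 * (2 * x) - α ^ 2 * (2 * 1)) / (2 * x) ^ 2) x :=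
    (hasStrictDerivAt_const x (α ^ 2)).fun_div ((hasStrictDerivAt_id x).const_mul 2) (by simpa)
  refine ((hasStrictDerivAt_id x).sub hinv).congr_deriv ?_
  field_simp
  ring

/-- The increment `c' - c` for which `x` is the first coordinate of a stationary point of `x + y`
on `D^m(c, c')`, for an obstacle with `a_m = α` and `b_m = β`. -/
def optimalIncrement (α β x : ℝ) : ℝ :=
  netGain α x - √(β ^ 2 / 2 * (1 + α ^ 2 / (2 * x ^ 2)))

theorem strictMonoOn_optimalIncrement (α β : ℝ) :
    StrictMonoOn (optimalIncrement α β) (Set.Ioi 0) := by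
  intro x (hx : 0 < x) z _ hxz
  have hdiv : α ^ 2 / (2 * z) ≤ α ^ 2 / (2 * x) := by gcongr
  have hroot : √(β ^ 2 / 2 * (1 + α ^ 2 / (2 * z ^ 2))) ≤
      √(β ^ 2 / 2 * (1 + α ^ 2 / (2 * x ^ 2))) := by gcongr
  unfold optimalIncrement netGain
  linarith

theorem exists_pos_hasStrictDerivAt_optimalIncrement (α : ℝ) {β x : ℝ} (hβ : β ≠ 0) (hx : 0 < x) :
    ∃ d, 0 < d ∧ HasStrictDerivAt (optimalIncrement α β) d x := by
  have hradicand : HasStrictDerivAt (fun z => β ^ 2 / 2 * (1 + α ^ 2 / (2 * z ^ 2)))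
      (-(β ^ 2 * α ^ 2 / (2 * x ^ 3))) x := by
    have hsq : HasStrictDerivAt (fun z : ℝ => 2 * z ^ 2) (2 * (2 * x)) x := by
      simpa using (hasStrictDerivAt_pow 2 x).const_mul 2
    refine ((((hasStrictDerivAt_const x (α ^ 2)).fun_div hsq (by positivity)).const_add
      1).const_mul (β ^ 2 / 2)).congr_deriv ?_
    field_simp
    ring
  refine ⟨_, ?_, (hasStrictDerivAt_netGain α hx.ne').sub (hradicand.sqrt (by positivity))⟩
  rw [neg_div, sub_neg_eq_add]
  positivity

variable {a b : ℕ → ℝ} {N : ℝ} {m : ℕ}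

theorem memDm_iff_of_ne_zero {c c' x y : ℝ} (hb : b m ≠ 0) :
    memDm a b N m c c' x y ↔ 0 < x ∧ 0 < netGain (a m) x - (c' - c) ∧ x + y ≤ N ∧
      y = b m ^ 2 / 2 / (netGain (a m) x - (c' - c)) := by
  have hconstraint : c + x - a m ^ 2 / (2 * x) - b m ^ 2 / (2 * y) = c' ↔
      netGain (a m) x - (c' - c) = b m ^ 2 / 2 / y := by
    rw [netGain, div_div]
    constructor <;> intro h <;> linarith
  rw [memDm, hconstraint]
  constructor
  · rintro ⟨hx, hy, hN, h⟩
    rw [h]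
    exact ⟨hx, by positivity, hN, by field_simp⟩
  · rintro ⟨hx, hpos, hN, rfl⟩
    exact ⟨hx, by positivity, hN, by field_simp⟩

theorem isLocalMin_of_isArgminDm {c c' x y : ℝ} (hb : b m ≠ 0)
    (h : isArgminDm a b N m c c' x y) (hN : x + y < N) :
    IsLocalMin (fun z => z + b m ^ 2 / 2 / (netGain (a m) z - (c' - c))) x := by
  obtain ⟨hx, hpos, -, rfl⟩ := (memDm_iff_of_ne_zero hb).1 h.1
  have hgain : ContinuousAt (fun z => netGain (a m) z - (c' - c)) x :=
    (hasStrictDerivAt_netGain (a m) hx.ne').hasDerivAt.continuousAt.sub continuousAt_const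
  have hsum : ContinuousAt (fun z => z + b m ^ 2 / 2 / (netGain (a m) z - (c' - c))) x :=
    continuousAt_id.add (continuousAt_const.div hgain hpos.ne')
  filter_upwards [lt_mem_nhds hx, hgain.eventually_const_lt hpos, hsum.eventually_lt_const hN]
    with z hz hgz hNz
  exact h.2 _ _ ((memDm_iff_of_ne_zero hb).2 ⟨hz, hgz, hNz.le, rfl⟩)

theorem optimalIncrement_eq_of_isArgminDm {c c' x y : ℝ} (hb : b m ≠ 0)
    (h : isArgminDm a b N m c c' x y) (hN : x + y < N) :
    optimalIncrement (a m) (b m) x = c' - c := by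
  obtain ⟨hx, hpos, -, -⟩ := (memDm_iff_of_ne_zero hb).1 h.1
  have hstat : (netGain (a m) x - (c' - c)) ^ 2 =
      b m ^ 2 / 2 * (1 + a m ^ 2 / (2 * x ^ 2)) :=
    sq_eq_mul_of_isLocalMin_add_div (g := fun z => netGain (a m) z - (c' - c))
      ((hasStrictDerivAt_netGain (a m) hx.ne').hasDerivAt.sub_const _) hpos.ne'
      (isLocalMin_of_isArgminDm hb h hN)
  rw [optimalIncrement, ← hstat, Real.sqrt_sq hpos.le, sub_sub_cancel]

theorem exists_pos_hasDerivAt_argminDm_right {x : ℝ → ℝ} {c C₀ : ℝ} (hb : b m ≠ 0)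
    (h : ∀ᶠ C in 𝓝 C₀, ∃ y, isArgminDm a b N m c C (x C) y ∧ x C + y < N) :
    ∃ d, 0 < d ∧ HasDerivAt x d C₀ := by
  have hright : ∀ᶠ C in 𝓝 C₀,
      x C ∈ Set.Ioi 0 ∧ c + optimalIncrement (a m) (b m) (x C) = C := by
    filter_upwards [h] with C ⟨y, hmin, hN⟩
    exact ⟨hmin.1.1, by rw [optimalIncrement_eq_of_isArgminDm hb hmin hN, add_sub_cancel]⟩
  have hpos : 0 < x C₀ := hright.self_of_nhds.1
  obtain ⟨d, hd, hderiv⟩ := exists_pos_hasStrictDerivAt_optimalIncrement (a m) hb hpos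
  have hinj : Set.InjOn (fun z => c + optimalIncrement (a m) (b m) z) (Set.Ioi 0) :=
    (add_right_injective c).comp_injOn (strictMonoOn_optimalIncrement (a m) (b m)).injOn
  exact ⟨d⁻¹, inv_pos.2 hd, (hasStrictDerivAt_of_eventually_rightInverse hinj (Ioi_mem_nhds hpos)
    (hderiv.const_add c) hd.ne' hright).hasDerivAt⟩

theorem exists_neg_hasDerivAt_argminDm_left {x : ℝ → ℝ} {c' C₀ : ℝ} (hb : b m ≠ 0)
    (h : ∀ᶠ C in 𝓝 C₀, ∃ y, isArgminDm a b N m C c' (x C) y ∧ x C + y < N) :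
    ∃ d, d < 0 ∧ HasDerivAt x d C₀ := by
  have hright : ∀ᶠ C in 𝓝 C₀,
      x C ∈ Set.Ioi 0 ∧ c' - optimalIncrement (a m) (b m) (x C) = C := by
    filter_upwards [h] with C ⟨y, hmin, hN⟩
    exact ⟨hmin.1.1, by rw [optimalIncrement_eq_of_isArgminDm hb hmin hN, sub_sub_cancel]⟩
  have hpos : 0 < x C₀ := hright.self_of_nhds.1
  obtain ⟨d, hd, hderiv⟩ := exists_pos_hasStrictDerivAt_optimalIncrement (a m) hb hpos
  have hinj : Set.InjOn (fun z => c' - optimalIncrement (a m) (b m) z) (Set.Ioi 0) :=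
    sub_right_injective.comp_injOn (strictMonoOn_optimalIncrement (a m) (b m)).injOn
  exact ⟨(-d)⁻¹, inv_lt_zero.2 (neg_neg_of_pos hd),
    (hasStrictDerivAt_of_eventually_rightInverse hinj (Ioi_mem_nhds hpos)
      (hderiv.const_sub c') (neg_ne_zero.2 hd.ne') hright).hasDerivAt⟩

variable {ℓ : ℕ} {c : ℕ → ℝ}

theorem add_le_one_of_isArgminDm (hc : memDc ℓ a b N c) (hm : m ∈ Finset.Icc 1 ℓ) {x y : ℝ}
    (hmin : isArgminDm a b N m (cbar ℓ c (m - 1)) (cbar ℓ c m) x y) : x + y ≤ 1 := by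
  obtain ⟨-, X, Y, hsum, hD⟩ := hc
  calc x + y ≤ X m + Y m := hmin.2 _ _ (hD m hm)
    _ ≤ ∑ i ∈ Finset.Icc 1 ℓ, (X i + Y i) :=
        Finset.single_le_sum (f := fun i => X i + Y i)
          (fun i hi => (add_pos (hD i hi).1 (hD i hi).2.1).le) hm
    _ ≤ 1 := hsum

theorem cbar_update_self (hm0 : m ≠ 0) (hmℓ : m ≠ ℓ) (C : ℝ) :
    cbar ℓ (Function.update c m C) m = C := by
  simp [cbar, hm0, hmℓ]

theorem cbar_update_of_ne {k : ℕ} (hk : k ≠ m) (C : ℝ) :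
    cbar ℓ (Function.update c m C) k = cbar ℓ c k := by
  simp [cbar, Function.update_of_ne hk]

theorem eventually_memDc_update (hc : c ∈ interior {c' : ℕ → ℝ | memDc ℓ a b N c'}) (m : ℕ) :
    ∀ᶠ C in 𝓝 (c m), memDc ℓ a b N (Function.update c m C) := by
  have hcont : Tendsto (Function.update c m) (𝓝 (c m)) (𝓝 c) := by
    simpa only [Function.update_eq_self] using
      (continuous_const.update m continuous_id : Continuous (Function.update c m)).tendsto (c m)
  exact hcont.eventually (mem_interior_iff_mem_nhds.1 hc)

theorem xmc_differentiable_monotone_general (hbm : b m ≠ 0) (hbm1 : b (m + 1) ≠ 0) (hN : 1 < N)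
    (hm1 : 1 ≤ m) (hm2 : m < ℓ)
    (hc : ∀ᶠ C in 𝓝 (c m), memDc ℓ a b N (Function.update c m C))
    {xm xm1 : ℝ → ℝ}
    (hxm : ∀ C : ℝ, memDc ℓ a b N (Function.update c m C) →
      ∃ yv : ℝ, isArgminDm a b N m (cbar ℓ (Function.update c m C) (m - 1))
        (cbar ℓ (Function.update c m C) m) (xm C) yv)
    (hxm1 : ∀ C : ℝ, memDc ℓ a b N (Function.update c m C) →
      ∃ yv : ℝ, isArgminDm a b N (m + 1) (cbar ℓ (Function.update c m C) m)
        (cbar ℓ (Function.update c m C) (m + 1)) (xm1 C) yv) :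
    (∃ d : ℝ, 0 < d ∧ HasDerivAt xm d (c m)) ∧
    (∃ d : ℝ, d < 0 ∧ HasDerivAt xm1 d (c m)) := by
  have hself : ∀ C, cbar ℓ (Function.update c m C) m = C :=
    cbar_update_self (by lia) (by lia)
  constructor
  · suffices hmin : ∀ᶠ C in 𝓝 (c m), ∃ y,
        isArgminDm a b N m (cbar ℓ c (m - 1)) C (xm C) y ∧ xm C + y < N from
      exists_pos_hasDerivAt_argminDm_right hbm hmin
    filter_upwards [hc] with C hC
    obtain ⟨y, hmin⟩ := hxm C hC
    have hsum := add_le_one_of_isArgminDm hC (Finset.mem_Icc.2 ⟨hm1, hm2.le⟩) hmin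
    rw [hself, cbar_update_of_ne (by lia)] at hmin
    exact ⟨y, hmin, hsum.trans_lt hN⟩
  · suffices hmin : ∀ᶠ C in 𝓝 (c m), ∃ y,
        isArgminDm a b N (m + 1) C (cbar ℓ c (m + 1)) (xm1 C) y ∧ xm1 C + y < N from
      exists_neg_hasDerivAt_argminDm_left hbm1 hmin
    filter_upwards [hc] with C hC
    obtain ⟨y, hmin⟩ := hxm1 C hC
    have hsum := add_le_one_of_isArgminDm hC (Finset.mem_Icc.2 ⟨by lia, hm2⟩) hmin
    rw [hself, cbar_update_of_ne (by lia)] at hmin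
    exact ⟨y, hmin, hsum.trans_lt hN⟩

end ArgminDerivative

/-- For `(c_1,…,c_{ℓ−1})` in the interior of `D^c` and `m ∈ {1,…,ℓ−1}`, the map
`c_m ↦ x_m^c` is differentiable with nonnegative derivative and the map `c_m ↦ x_{m+1}^c`
is differentiable with nonpositive derivative. -/
theorem xmc_differentiable_monotone (ℓ : ℕ) (hℓ : 1 ≤ ℓ) (a b : ℕ → ℝ)
    (ha : ∀ i ∈ Finset.Icc 1 ℓ, 0 < a i) (hb : ∀ i ∈ Finset.Icc 1 ℓ, 0 < b i)
    (N : ℝ) (hN : 1 < N)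
    (c : ℕ → ℝ) (hc : c ∈ interior {c' : ℕ → ℝ | memDc ℓ a b N c'})
    (m : ℕ) (hm1 : 1 ≤ m) (hm2 : m < ℓ)
    (xm xm1 : ℝ → ℝ)
    (hxm : ∀ C : ℝ, memDc ℓ a b N (Function.update c m C) →
      ∃ yv : ℝ, isArgminDm a b N m (cbar ℓ (Function.update c m C) (m - 1))
        (cbar ℓ (Function.update c m C) m) (xm C) yv)
    (hxm1 : ∀ C : ℝ, memDc ℓ a b N (Function.update c m C) →
      ∃ yv : ℝ, isArgminDm a b N (m + 1) (cbar ℓ (Function.update c m C) m)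
        (cbar ℓ (Function.update c m C) (m + 1)) (xm1 C) yv) :
    (∃ d : ℝ, 0 ≤ d ∧ HasDerivAt xm d (c m)) ∧
    (∃ d : ℝ, d ≤ 0 ∧ HasDerivAt xm1 d (c m)) := by
  obtain ⟨⟨d, hd, hderiv⟩, d', hd', hderiv'⟩ := xmc_differentiable_monotone_general
    (hb m (Finset.mem_Icc.2 ⟨hm1, hm2.le⟩)).ne' (hb (m + 1) (Finset.mem_Icc.2 ⟨by lia, hm2⟩)).ne'
    hN hm1 hm2 (eventually_memDc_update hc m) hxm hxm1
  exact ⟨⟨d, hd.le, hderiv⟩, d', hd'.le, hderiv'⟩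
end
end

section
/- Let ℓ ≥ 1, let a_1,…,a_ℓ, b_1,…,b_ℓ be positive reals, let x₁ > 0, and set κ = x₁/a₁ − a₁/(2x₁). Then the system of linear equations c_m = ((b_{m+1}a_m − b_m a_{m+1})/(b_m + b_{m+1}))·κ + (b_{m+1}/(b_m + b_{m+1}))·c_{m−1} + (b_m/(b_m + b_{m+1}))·c_{m+1}, for m = 1,…,ℓ−1 with the conventions c_0 = c_ℓ = 0, has exactly one solution (c_1,…,c_{ℓ−1}) ∈ ℝ^{ℓ−1}, namely c_m = [(Σ_{i=1}^m a_i)(Σ_{i=m+1}^ℓ b_i) − (Σ_{i=1}^m b_i)(Σ_{i=m+1}^ℓ a_i)]/(Σ_{i=1}^ℓ b_i) · κ. -/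
open Finset

noncomputable section

/-!
Write `r m = c m - c (m - 1) - a m * κ`. The `m`-th equation says that
`b (m + 1) * r m = b m * r (m + 1)`, so the system says that `r` is proportional to `b`, say
`r = t • b`. Since `c 0 = 0`, summation gives `c m = A m * κ + t * B m` with the partial sums
`A m = a 1 + ⋯ + a m` and `B m = b 1 + ⋯ + b m`, and `c ℓ = 0` forces `t = -(A ℓ * κ) / B ℓ`.
-/

section Recurrence

lemma sum_Icc_succ_eq_sub {G : Type*} [AddCommGroup G] (f : ℕ → G) {m n : ℕ} (hmn : m ≤ n) :
    ∑ i ∈ Icc (m + 1) n, f i = ∑ i ∈ Icc 1 n, f i - ∑ i ∈ Icc 1 m, f i := by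
  apply eq_sub_of_add_eq'
  simpa only [Ico_add_one_right_eq_Icc] using
    sum_Ico_consecutive f (Nat.le_add_left 1 m) (Nat.add_le_add_right hmn 1)

lemma forall_eq_pred_add_iff_forall_eq_add_sum {M : Type*} [AddCommMonoid M] (d f : ℕ → M)
    (n : ℕ) :
    (∀ m ∈ Icc 1 n, d m = d (m - 1) + f m) ↔ ∀ m ≤ n, d m = d 0 + ∑ i ∈ Icc 1 m, f i := by
  constructor
  · intro hstep m hm
    induction m with
    | zero => simp
    | succ m ih =>
      rw [hstep (m + 1) (mem_Icc.2 ⟨by omega, hm⟩), Nat.add_sub_cancel, ih (by omega),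
        sum_Icc_succ_top (by omega), add_assoc]
  · intro hsum m hm
    obtain ⟨h1, hmn⟩ := mem_Icc.1 hm
    obtain ⟨k, rfl⟩ := Nat.exists_eq_add_of_le' h1
    rw [Nat.add_sub_cancel, hsum (k + 1) hmn, hsum k (by omega), sum_Icc_succ_top (by omega),
      add_assoc]

variable {K : Type*} [Field K]

lemma eq_weighted_average_iff {p q : K} (hpq : p + q ≠ 0) (u v κ x y z : K) :
    y = (q * u - p * v) / (p + q) * κ + q / (p + q) * x + p / (p + q) * z ↔
      q * (y - x - u * κ) = p * (z - y - v * κ) := by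
  field_simp
  constructor <;> intro h <;> linear_combination h

lemma forall_cross_mul_eq_iff_exists_eq_mul {b : ℕ → K} {n : ℕ} (hb : ∀ i ∈ Icc 1 n, b i ≠ 0)
    (r : ℕ → K) :
    (∀ m, 1 ≤ m → m < n → b (m + 1) * r m = b m * r (m + 1)) ↔
      ∃ t, ∀ m ∈ Icc 1 n, r m = t * b m := by
  constructor
  · intro hcross
    refine ⟨r 1 / b 1, fun m hm => ?_⟩
    obtain ⟨h1, hmn⟩ := mem_Icc.1 hm
    induction m, h1 using Nat.le_induction with
    | base => exact (div_mul_cancel₀ _ (hb 1 hm)).symm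
    | succ m h1 ih =>
      have hm' : m ∈ Icc 1 n := mem_Icc.2 ⟨h1, by omega⟩
      apply mul_left_cancel₀ (hb m hm')
      rw [← hcross m h1 hmn, ih hm' (by omega)]
      ring
  · rintro ⟨t, ht⟩ m h1 hmn
    rw [ht m (mem_Icc.2 ⟨h1, hmn.le⟩), ht (m + 1) (mem_Icc.2 ⟨by omega, hmn⟩)]
    ring

lemma exists_eq_add_mul_iff_of_eq_zero {ι : Type*} {s : Set ι} {j : ι} (hj : j ∈ s)
    {d A B : ι → K} (hd : d j = 0) (hB : B j ≠ 0) :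
    (∃ t, ∀ i ∈ s, d i = A i + t * B i) ↔ ∀ i ∈ s, d i = A i - A j / B j * B i := by
  constructor
  · rintro ⟨t, ht⟩ i hi
    have htj : t = -(A j / B j) := by
      rw [← neg_div, eq_div_iff hB]
      linear_combination hd - ht j hj
    rw [ht i hi, htj]
    ring
  · exact fun h => ⟨-(A j / B j), fun i hi => by rw [h i hi]; ring⟩

end Recurrence

section BoundaryConvention

@[simp]
lemma cbar_zero (ℓ : ℕ) (c : ℕ → ℝ) : cbar ℓ c 0 = 0 := by simp [cbar]

@[simp]
lemma cbar_self (ℓ : ℕ) (c : ℕ → ℝ) : cbar ℓ c ℓ = 0 := by simp [cbar]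

lemma cbar_of_pos_of_lt {ℓ m : ℕ} (c : ℕ → ℝ) (hm : 1 ≤ m) (hmℓ : m < ℓ) : cbar ℓ c m = c m :=
  if_neg (by omega)

lemma forall_cbar_eq_iff {ℓ : ℕ} (c : ℕ → ℝ) {g : ℕ → ℝ} (hg0 : g 0 = 0) (hgℓ : g ℓ = 0) :
    (∀ m ≤ ℓ, cbar ℓ c m = g m) ↔ ∀ m, 1 ≤ m → m < ℓ → c m = g m := by
  constructor
  · exact fun h m h1 hmℓ => cbar_of_pos_of_lt c h1 hmℓ ▸ h m hmℓ.le
  · intro h m hm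
    rcases m.eq_zero_or_pos with rfl | h1
    · rw [cbar_zero, hg0]
    rcases hm.eq_or_lt with rfl | hmℓ
    · rw [cbar_self, hgℓ]
    · rw [cbar_of_pos_of_lt c h1 hmℓ, h m h1 hmℓ]

end BoundaryConvention

section ExplicitSolution

@[simp]
lemma coefC_zero (ℓ : ℕ) (a b : ℕ → ℝ) : coefC ℓ a b 0 = 0 := by simp [coefC]

@[simp]
lemma coefC_self (ℓ : ℕ) (a b : ℕ → ℝ) : coefC ℓ a b ℓ = 0 := by simp [coefC]

lemma coefC_eq_sub {ℓ m : ℕ} (a : ℕ → ℝ) {b : ℕ → ℝ} (hm : m ≤ ℓ)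
    (hB : ∑ i ∈ Icc 1 ℓ, b i ≠ 0) :
    coefC ℓ a b m = ∑ i ∈ Icc 1 m, a i -
      (∑ i ∈ Icc 1 ℓ, a i) / (∑ i ∈ Icc 1 ℓ, b i) * ∑ i ∈ Icc 1 m, b i := by
  rw [coefC, sum_Icc_succ_eq_sub a hm, sum_Icc_succ_eq_sub b hm]
  field_simp
  ring

lemma exists_cbar_eq_add_mul_iff {ℓ : ℕ} (a : ℕ → ℝ) {b : ℕ → ℝ} (hB : ∑ i ∈ Icc 1 ℓ, b i ≠ 0)
    (κ : ℝ) (c : ℕ → ℝ) :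
    (∃ t, ∀ m ≤ ℓ, cbar ℓ c m = (∑ i ∈ Icc 1 m, a i) * κ + t * ∑ i ∈ Icc 1 m, b i) ↔
      ∀ m ≤ ℓ, cbar ℓ c m = coefC ℓ a b m * κ := by
  refine (exists_eq_add_mul_iff_of_eq_zero (s := Set.Iic ℓ) Set.self_mem_Iic
    (A := fun m => (∑ i ∈ Icc 1 m, a i) * κ) (B := fun m => ∑ i ∈ Icc 1 m, b i)
    (cbar_self ℓ c) hB).trans (forall₂_congr fun m hm => ?_)
  rw [coefC_eq_sub a hm hB, sub_mul, mul_div_right_comm, mul_right_comm]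

end ExplicitSolution

theorem linear_system_unique_solution_general (ℓ : ℕ) (a b : ℕ → ℝ)
    (hb : ∀ i ∈ Icc 1 ℓ, b i ≠ 0) (hadj : ∀ m, 1 ≤ m → m < ℓ → b m + b (m + 1) ≠ 0)
    (hB : ∑ i ∈ Icc 1 ℓ, b i ≠ 0) (κ : ℝ) (c : ℕ → ℝ) :
    (∀ m : ℕ, 1 ≤ m → m < ℓ →
      c m = (b (m + 1) * a m - b m * a (m + 1)) / (b m + b (m + 1)) * κ +
        b (m + 1) / (b m + b (m + 1)) * cbar ℓ c (m - 1) +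
        b m / (b m + b (m + 1)) * cbar ℓ c (m + 1)) ↔
    (∀ m : ℕ, 1 ≤ m → m < ℓ → c m = coefC ℓ a b m * κ) := by
  let r : ℕ → ℝ := fun m => cbar ℓ c m - cbar ℓ c (m - 1) - a m * κ
  calc
    _ ↔ ∀ m, 1 ≤ m → m < ℓ → b (m + 1) * r m = b m * r (m + 1) :=
      forall₃_congr fun m h1 hmℓ => by
        rw [← cbar_of_pos_of_lt c h1 hmℓ]
        exact eq_weighted_average_iff (hadj m h1 hmℓ) ..
    _ ↔ ∃ t, ∀ m ∈ Icc 1 ℓ, r m = t * b m := forall_cross_mul_eq_iff_exists_eq_mul hb r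
    _ ↔ ∃ t, ∀ m ≤ ℓ, cbar ℓ c m = (∑ i ∈ Icc 1 m, a i) * κ + t * ∑ i ∈ Icc 1 m, b i :=
      exists_congr fun t => by
        simp only [r, sub_eq_iff_eq_add']
        rw [forall_eq_pred_add_iff_forall_eq_add_sum]
        simp only [cbar_zero, zero_add, sum_add_distrib, sum_mul, mul_sum]
    _ ↔ ∀ m ≤ ℓ, cbar ℓ c m = coefC ℓ a b m * κ := exists_cbar_eq_add_mul_iff a hB κ c
    _ ↔ _ := forall_cbar_eq_iff c (by simp) (by simp)

/-- The linear system `c_m = ((b_{m+1}a_m − b_m a_{m+1})/(b_m+b_{m+1}))·κ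
+ (b_{m+1}/(b_m+b_{m+1}))·c_{m−1} + (b_m/(b_m+b_{m+1}))·c_{m+1}` (with `c_0 = c_ℓ = 0`)
has exactly one solution, given by the explicit formula. -/
theorem linear_system_unique_solution (ℓ : ℕ) (hℓ : 1 ≤ ℓ) (a b : ℕ → ℝ)
    (ha : ∀ i ∈ Finset.Icc 1 ℓ, 0 < a i) (hb : ∀ i ∈ Finset.Icc 1 ℓ, 0 < b i)
    (x1 : ℝ) (hx1 : 0 < x1) (κ : ℝ) (hκ : κ = x1 / a 1 - a 1 / (2 * x1))
    (c : ℕ → ℝ) :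
    (∀ m : ℕ, 1 ≤ m → m < ℓ →
      c m = (b (m + 1) * a m - b m * a (m + 1)) / (b m + b (m + 1)) * κ +
        b (m + 1) / (b m + b (m + 1)) * cbar ℓ c (m - 1) +
        b m / (b m + b (m + 1)) * cbar ℓ c (m + 1)) ↔
    (∀ m : ℕ, 1 ≤ m → m < ℓ → c m = coefC ℓ a b m * κ) := by
  have hadj : ∀ m, 1 ≤ m → m < ℓ → b m + b (m + 1) ≠ 0 := fun m h1 hmℓ =>
    (add_pos (hb m (mem_Icc.2 ⟨h1, hmℓ.le⟩)) (hb (m + 1) (mem_Icc.2 ⟨by omega, hmℓ⟩))).ne'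
  have hB : ∑ i ∈ Icc 1 ℓ, b i ≠ 0 := (sum_pos hb (nonempty_Icc.2 hℓ)).ne'
  exact linear_system_unique_solution_general ℓ a b (fun i hi => (hb i hi).ne') hadj hB κ c
end
end

section
/- Assume D̂ is nonempty and the late-expensive-obstacles assumption holds. Then the maximum of the objective function F over D̂ equals (h*)²/2, where h* = √2 · (1 − (Σ_{i=1}^ℓ a_i) f(c̃) − (Σ_{i=1}^ℓ b_i)²/(2(Σ_{i=1}^ℓ a_i)(f(c̃) − 1/(2f(c̃))))). -/
open Finset

noncomputable section

/-!
Spending time `x` on a branching length `a` costs `a² / (2x)`, and the tangent line to this convex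
cost at `x = a p` gives `a² / (2x) ≥ a / p - x / (2p²)`; the same holds for obstacle lengths with a
pace `q`. If `1 / q² = 2 + 1 / p²`, then summing these bounds along the constraint defining `D̂`
bounds the total time `∑ (x i + y i)` from below (weak Lagrangian duality). The bound is
attained at `x i = a i * p`, `y i = b i * q` as soon as this point satisfies the constraint, which
determines `p` and `q`: `p = f(c̃)`. The partial sums at this point are proportional to the gap
between the total ratio `B / A` and the ratio of the first `m` obstacles, so the
late-expensive-obstacles assumption makes it feasible. On `D̂` the two factors of `F` coincide, so
minimizing the total time maximizes `F`.
-/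

section Fval

variable {c : ℝ}

lemma fval_sq (hc : 0 ≤ c) : fval c ^ 2 = (1 + c) / 2 + √(c ^ 2 / 4 + c) :=
  Real.sq_sqrt (by positivity)

lemma fval_pos (hc : 0 ≤ c) : 0 < fval c :=
  Real.sqrt_pos.mpr (by positivity)

lemma fval_sub_inv_pos (hc : 0 < c) : 0 < fval c - 1 / (2 * fval c) := by
  have hf := fval_pos hc.le
  have hsq : 1 < 2 * fval c ^ 2 := by
    rw [fval_sq hc.le]
    linarith [Real.sqrt_nonneg (c ^ 2 / 4 + c)]
  rw [sub_pos, div_lt_iff₀ (by positivity)]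
  linarith

lemma fval_sub_inv_sq (hc : 0 ≤ c) :
    (fval c - 1 / (2 * fval c)) ^ 2 = c * (1 + 1 / (2 * fval c ^ 2)) := by
  have hf := fval_pos hc
  have quadratic : (2 * fval c ^ 2 - 1) ^ 2 = 2 * c * (2 * fval c ^ 2 + 1) := by
    rw [fval_sq hc]
    linear_combination 4 * Real.sq_sqrt (show 0 ≤ c ^ 2 / 4 + c by positivity)
  field_simp
  linear_combination quadratic

end Fval

/-- The time `p` spent per unit of branching length in the optimal crossing of a block with
branching length `A` and obstacle length `B`. -/
def branchingPace (A B : ℝ) : ℝ := fval (B ^ 2 / (2 * A ^ 2))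

/-- The time `q` spent per unit of obstacle length in the optimal crossing of a block with
branching length `A` and obstacle length `B`; it is chosen so that the constraint of `D̂` holds. -/
def obstaclePace (A B : ℝ) : ℝ :=
  B / (2 * A * (branchingPace A B - 1 / (2 * branchingPace A B)))

section Pace

variable {A B : ℝ}

lemma branchingPace_pos : 0 < branchingPace A B := fval_pos (by positivity)

lemma branchingPace_sub_inv_pos (hA : 0 < A) (hB : 0 < B) :
    0 < branchingPace A B - 1 / (2 * branchingPace A B) :=
  fval_sub_inv_pos (by positivity)

lemma obstaclePace_pos (hA : 0 < A) (hB : 0 < B) : 0 < obstaclePace A B := by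
  have hgain := branchingPace_sub_inv_pos hA hB
  unfold obstaclePace
  positivity

lemma div_two_mul_obstaclePace (hA : 0 < A) (hB : 0 < B) :
    B / (2 * obstaclePace A B) =
      A * (branchingPace A B - 1 / (2 * branchingPace A B)) := by
  have hgain := (branchingPace_sub_inv_pos hA hB).ne'
  unfold obstaclePace
  generalize branchingPace A B - 1 / (2 * branchingPace A B) = gain at *
  field_simp

lemma one_div_obstaclePace_sq (hA : 0 < A) (hB : 0 < B) :
    1 / obstaclePace A B ^ 2 = 2 + 1 / branchingPace A B ^ 2 := by
  have hp : 0 < branchingPace A B := branchingPace_pos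
  calc 1 / obstaclePace A B ^ 2
      = 4 * A ^ 2 / B ^ 2 * (branchingPace A B - 1 / (2 * branchingPace A B)) ^ 2 := by
        unfold obstaclePace
        rw [div_pow, one_div_div]
        ring
    _ = 4 * A ^ 2 / B ^ 2 * (B ^ 2 / (2 * A ^ 2) * (1 + 1 / (2 * branchingPace A B ^ 2))) := by
        rw [branchingPace, fval_sub_inv_sq (by positivity)]
    _ = 2 + 1 / branchingPace A B ^ 2 := by
        field_simp
        ring

lemma blockTime_eq_mul_pace_add (A B : ℝ) :
    blockTime A B = A * branchingPace A B + B * obstaclePace A B := by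
  unfold blockTime obstaclePace branchingPace
  ring

end Pace

lemma div_sub_div_le_sq_div {a x p : ℝ} (hx : 0 < x) :
    a / p - x / (2 * p ^ 2) ≤ a ^ 2 / (2 * x) := by
  rw [le_div_iff₀ (by positivity)]
  calc (a / p - x / (2 * p ^ 2)) * (2 * x) = 2 * a * (x / p) - (x / p) ^ 2 := by ring
    _ ≤ a ^ 2 := sub_le_iff_le_add.mpr (two_mul_le_add_sq a (x / p))

section Duality

variable {ι : Type*} {s : Finset ι} {a b x y : ι → ℝ}

lemma sum_div_pace_add_le {p q : ℝ} (hx : ∀ i ∈ s, 0 < x i) (hy : ∀ i ∈ s, 0 < y i)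
    (hpq : 1 / q ^ 2 = 2 + 1 / p ^ 2)
    (hbudget : 0 ≤ ∑ i ∈ s, (x i - a i ^ 2 / (2 * x i) - b i ^ 2 / (2 * y i))) :
    (∑ i ∈ s, a i) / p + (∑ i ∈ s, b i) / q ≤ (∑ i ∈ s, (x i + y i)) / (2 * q ^ 2) := by
  have tangent : ∑ i ∈ s, (x i - a i ^ 2 / (2 * x i) - b i ^ 2 / (2 * y i)) ≤
      ∑ i ∈ s, ((x i + y i) / (2 * q ^ 2) - (a i / p + b i / q)) := by
    refine sum_le_sum fun i hi => ?_
    have ha := div_sub_div_le_sq_div (a := a i) (p := p) (hx i hi)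
    have hb := div_sub_div_le_sq_div (a := b i) (p := q) (hy i hi)
    have hslope : x i / (2 * q ^ 2) = x i + x i / (2 * p ^ 2) := by
      linear_combination x i / 2 * hpq
    rw [add_div]
    linarith
  have hnonneg := hbudget.trans tangent
  rw [sum_sub_distrib, sum_add_distrib, ← sum_div, ← sum_div, ← sum_div] at hnonneg
  exact sub_nonneg.mp hnonneg

theorem blockTime_le_sum (hA : 0 < ∑ i ∈ s, a i) (hB : 0 < ∑ i ∈ s, b i)
    (hx : ∀ i ∈ s, 0 < x i) (hy : ∀ i ∈ s, 0 < y i)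
    (hbudget : 0 ≤ ∑ i ∈ s, (x i - a i ^ 2 / (2 * x i) - b i ^ 2 / (2 * y i))) :
    blockTime (∑ i ∈ s, a i) (∑ i ∈ s, b i) ≤ ∑ i ∈ s, (x i + y i) := by
  have hpq := one_div_obstaclePace_sq hA hB
  have hbalance := div_two_mul_obstaclePace hA hB
  have hdual := sum_div_pace_add_le hx hy hpq hbudget
  have hp := branchingPace_pos (A := ∑ i ∈ s, a i) (B := ∑ i ∈ s, b i)
  have hq := obstaclePace_pos hA hB
  rw [blockTime_eq_mul_pace_add]
  generalize branchingPace (∑ i ∈ s, a i) (∑ i ∈ s, b i) = p at *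
  generalize obstaclePace (∑ i ∈ s, a i) (∑ i ∈ s, b i) = q at *
  generalize ∑ i ∈ s, a i = A at *
  generalize ∑ i ∈ s, b i = B at *
  have htight : (A * p + B * q) / (2 * q ^ 2) = A / p + B / q :=
    calc (A * p + B * q) / (2 * q ^ 2)
        = A * p / 2 * (1 / q ^ 2) + B / (2 * q) := by field_simp
      _ = A / p + 2 * (A * (p - 1 / (2 * p))) - B / (2 * q) + B / (2 * q) := by
          rw [hpq, hbalance]
          field_simp
          ring
      _ = A / p + B / q := by
          rw [← hbalance]
          ring
  exact (div_le_div_iff_of_pos_right (by positivity)).mp (htight.trans_le hdual)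

lemma sum_budget_at_pace {A B : ℝ} (hA : 0 < A) (hB : 0 < B) :
    ∑ i ∈ s, (a i * branchingPace A B - a i ^ 2 / (2 * (a i * branchingPace A B)) -
        b i ^ 2 / (2 * (b i * obstaclePace A B))) =
      (branchingPace A B - 1 / (2 * branchingPace A B)) / B *
        ((∑ i ∈ s, a i) * B - (∑ i ∈ s, b i) * A) := by
  have hp : 0 < branchingPace A B := branchingPace_pos
  have hrate : 1 / (2 * obstaclePace A B) =
      A * (branchingPace A B - 1 / (2 * branchingPace A B)) / B := by
    rw [← div_two_mul_obstaclePace hA hB]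
    field_simp
  rw [sum_mul, sum_mul, ← sum_sub_distrib, mul_sum]
  refine sum_congr rfl fun i _ => ?_
  calc a i * branchingPace A B - a i ^ 2 / (2 * (a i * branchingPace A B)) -
        b i ^ 2 / (2 * (b i * obstaclePace A B))
      = a i * (branchingPace A B - 1 / (2 * branchingPace A B)) -
          b i * (1 / (2 * obstaclePace A B)) := by field_simp
    _ = _ := by
        rw [hrate]
        field_simp

lemma sum_mul_pace_add {A B : ℝ} (hA : ∑ i ∈ s, a i = A) (hB : ∑ i ∈ s, b i = B) :
    ∑ i ∈ s, (a i * branchingPace A B + b i * obstaclePace A B) = blockTime A B := by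
  rw [sum_add_distrib, ← sum_mul, ← sum_mul, hA, hB, blockTime_eq_mul_pace_add]

end Duality

section Landscape

variable {ℓ : ℕ} {a b x y : ℕ → ℝ}

lemma sum_Icc_one_pos {w : ℕ → ℝ} (hℓ : 1 ≤ ℓ) (hw : ∀ i ∈ Icc 1 ℓ, 0 < w i) :
    0 < ∑ i ∈ Icc 1 ℓ, w i :=
  sum_pos hw (nonempty_Icc.mpr hℓ)

lemma sum_Icc_one_add_sum_Icc {M : Type*} [AddCommMonoid M] (w : ℕ → M) {m : ℕ} (hm : m ≤ ℓ) :
    ∑ i ∈ Icc 1 m, w i + ∑ i ∈ Icc (m + 1) ℓ, w i = ∑ i ∈ Icc 1 ℓ, w i := by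
  simpa only [Ico_add_one_right_eq_Icc] using
    sum_Ico_consecutive w (Nat.le_add_left 1 m) (Nat.add_le_add_right hm 1)

lemma sum_prefix_mul_sum_le (ha : ∀ i ∈ Icc 1 ℓ, 0 < a i)
    (hlate : ∀ m, 1 ≤ m → m < ℓ → ratioBA a b 1 m ≤ ratioBA a b (m + 1) ℓ)
    {m : ℕ} (hm : m ∈ Icc 1 ℓ) :
    (∑ i ∈ Icc 1 m, b i) * ∑ i ∈ Icc 1 ℓ, a i ≤
      (∑ i ∈ Icc 1 m, a i) * ∑ i ∈ Icc 1 ℓ, b i := by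
  obtain ⟨hm₁, hmℓ⟩ := mem_Icc.mp hm
  rcases hmℓ.eq_or_lt with rfl | hlt
  · exact (mul_comm _ _).le
  have hprefix : 0 < ∑ i ∈ Icc 1 m, a i :=
    sum_Icc_one_pos hm₁ fun i hi => ha i (Icc_subset_Icc_right hmℓ hi)
  have hsuffix : 0 < ∑ i ∈ Icc (m + 1) ℓ, a i :=
    sum_pos (fun i hi => ha i (Icc_subset_Icc_left (by lia) hi)) (nonempty_Icc.mpr hlt)
  have hcross := (div_le_div_iff₀ hprefix hsuffix).mp (hlate m hm₁ hlt)
  rw [← sum_Icc_one_add_sum_Icc a hmℓ, ← sum_Icc_one_add_sum_Icc b hmℓ]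
  linarith

lemma Fobj_eq_sq_of_memDhat (h : memDhat ℓ a b x y) :
    Fobj ℓ a b x y = (1 - ∑ i ∈ Icc 1 ℓ, (x i + y i)) ^ 2 := by
  have hfactor : ∑ i ∈ Icc 1 ℓ, (y i + a i ^ 2 / (2 * x i) + b i ^ 2 / (2 * y i)) =
      ∑ i ∈ Icc 1 ℓ, (x i + y i) := by
    rw [← sub_eq_zero, ← neg_eq_zero, ← h.2, ← sum_sub_distrib, ← sum_neg_distrib]
    exact sum_congr rfl fun i _ => by ring
  rw [Fobj, hfactor, sq]

lemma blockTime_le_sum_of_memDhat (hA : 0 < ∑ i ∈ Icc 1 ℓ, a i) (hB : 0 < ∑ i ∈ Icc 1 ℓ, b i)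
    (h : memDhat ℓ a b x y) :
    blockTime (∑ i ∈ Icc 1 ℓ, a i) (∑ i ∈ Icc 1 ℓ, b i) ≤ ∑ i ∈ Icc 1 ℓ, (x i + y i) :=
  blockTime_le_sum hA hB (fun i hi => (h.1.1 i hi).1) (fun i hi => (h.1.1 i hi).2) h.2.ge

lemma Fobj_le_of_memDhat (hA : 0 < ∑ i ∈ Icc 1 ℓ, a i) (hB : 0 < ∑ i ∈ Icc 1 ℓ, b i)
    (h : memDhat ℓ a b x y) :
    Fobj ℓ a b x y ≤ (1 - blockTime (∑ i ∈ Icc 1 ℓ, a i) (∑ i ∈ Icc 1 ℓ, b i)) ^ 2 := by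
  rw [Fobj_eq_sq_of_memDhat h]
  have htime := blockTime_le_sum_of_memDhat hA hB h
  have hbound := h.1.2.1
  exact pow_le_pow_left₀ (by linarith) (by linarith) 2

lemma memDhat_pace {A B : ℝ} (hA : 0 < A) (hB : 0 < B)
    (hsumA : ∑ i ∈ Icc 1 ℓ, a i = A) (hsumB : ∑ i ∈ Icc 1 ℓ, b i = B)
    (ha : ∀ i ∈ Icc 1 ℓ, 0 < a i) (hb : ∀ i ∈ Icc 1 ℓ, 0 < b i)
    (hprefix : ∀ m ∈ Icc 1 ℓ, (∑ i ∈ Icc 1 m, b i) * A ≤ (∑ i ∈ Icc 1 m, a i) * B)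
    (htime : blockTime A B ≤ 1) :
    memDhat ℓ a b (fun i => a i * branchingPace A B) (fun i => b i * obstaclePace A B) := by
  refine ⟨⟨fun i hi => ⟨mul_pos (ha i hi) branchingPace_pos,
    mul_pos (hb i hi) (obstaclePace_pos hA hB)⟩, ?_, fun m hm => ?_⟩, ?_⟩
  · rwa [sum_mul_pace_add hsumA hsumB]
  · rw [sum_budget_at_pace hA hB]
    have hgain := branchingPace_sub_inv_pos hA hB
    exact mul_nonneg (by positivity) (sub_nonneg.mpr (hprefix m hm))
  · rw [sum_budget_at_pace hA hB, hsumA, hsumB, mul_comm B, sub_self, mul_zero]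

lemma half_sq_height_eq (A B : ℝ) :
    (√2 * (1 - A * fval (B ^ 2 / (2 * A ^ 2)) - B ^ 2 / (2 * A *
      (fval (B ^ 2 / (2 * A ^ 2)) - 1 / (2 * fval (B ^ 2 / (2 * A ^ 2))))))) ^ 2 / 2 =
      (1 - blockTime A B) ^ 2 := by
  rw [mul_pow, Real.sq_sqrt zero_le_two, mul_div_cancel_left₀ _ two_ne_zero, blockTime, sub_sub]

end Landscape

theorem max_over_Dhat_late_expensive_general (ℓ : ℕ) (hℓ : 1 ≤ ℓ) (a b : ℕ → ℝ)
    (ha : ∀ i ∈ Icc 1 ℓ, 0 < a i) (hb : ∀ i ∈ Icc 1 ℓ, 0 < b i)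
    (hDhat : ∃ x y : ℕ → ℝ, memDhat ℓ a b x y)
    (hlate : ∀ m, 1 ≤ m → m < ℓ → ratioBA a b 1 m ≤ ratioBA a b (m + 1) ℓ) :
    IsGreatest {v : ℝ | ∃ x y : ℕ → ℝ, memDhat ℓ a b x y ∧ Fobj ℓ a b x y = v}
      ((√2 * (1 - (∑ i ∈ Icc 1 ℓ, a i) * fval (ctilde ℓ a b) - (∑ i ∈ Icc 1 ℓ, b i) ^ 2 /
        (2 * (∑ i ∈ Icc 1 ℓ, a i) *
          (fval (ctilde ℓ a b) - 1 / (2 * fval (ctilde ℓ a b)))))) ^ 2 / 2) := by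
  have hA := sum_Icc_one_pos hℓ ha
  have hB := sum_Icc_one_pos hℓ hb
  rw [ctilde, half_sq_height_eq]
  constructor
  · obtain ⟨x, y, hxy⟩ := hDhat
    have htime := (blockTime_le_sum_of_memDhat hA hB hxy).trans hxy.1.2.1
    have hopt := memDhat_pace hA hB rfl rfl ha hb (fun m => sum_prefix_mul_sum_le ha hlate) htime
    exact ⟨_, _, hopt, by rw [Fobj_eq_sq_of_memDhat hopt, sum_mul_pace_add rfl rfl]⟩
  · rintro _ ⟨x, y, hxy, rfl⟩
    exact Fobj_le_of_memDhat hA hB hxy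

/-- If `D̂` is nonempty and the late-expensive-obstacles assumption holds,
the maximum of `F` over `D̂` equals `(h*)²/2` with
`h* = √2 (1 − (Σ a_i) f(c̃) − (Σ b_i)²/(2 (Σ a_i)(f(c̃) − 1/(2 f(c̃)))))`. -/
theorem max_over_Dhat_late_expensive (ℓ : ℕ) (hℓ : 1 ≤ ℓ) (a b : ℕ → ℝ)
    (ha : ∀ i ∈ Finset.Icc 1 ℓ, 0 < a i) (hb : ∀ i ∈ Finset.Icc 1 ℓ, 0 < b i)
    (hDhat : ∃ x y : ℕ → ℝ, memDhat ℓ a b x y)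
    (hlate : LateExpensive ℓ a b) :
    IsGreatest {v : ℝ | ∃ x y : ℕ → ℝ, memDhat ℓ a b x y ∧ Fobj ℓ a b x y = v}
      ((Real.sqrt 2 *
        (1 - (∑ i ∈ Finset.Icc 1 ℓ, a i) * fval (ctilde ℓ a b) -
          (∑ i ∈ Finset.Icc 1 ℓ, b i) ^ 2 /
            (2 * (∑ i ∈ Finset.Icc 1 ℓ, a i) *
              (fval (ctilde ℓ a b) - 1 / (2 * fval (ctilde ℓ a b)))))) ^ 2 / 2) :=
  max_over_Dhat_late_expensive_general ℓ hℓ a b ha hb hDhat fun m hm₁ hmℓ => (hlate m hm₁ hmℓ).le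
end
end
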